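/- Let δ > 0 and h₁, h₂, h₃ ∈ C¹(B_δ(0)), and suppose there exist constants C₁ > 0 and p > 1 such that for all ξ = (ξ₁,ξ₂,ξ₃) ∈ B_δ(0): Σ_{j=1}^{3} |h_j(ξ)| ≤ C₁(ξ₁² + ξ₂² + ξ₃²), Σ_{j=1}^{3} |∇h_j(ξ)| ≤ C₁(|ξ₁| + |ξ₂| + |ξ₃|), h₂(ξ) ≤ −C₁|ξ₂|^p, and h₂(ξ₁, 0, ξ₃) = 0. Fix a > 0 and c < 0. Then there exist r₀ ∈ (0, δ/2) and a Lipschitz function w : [0,r₀] × [−r₀,r₀] → [−r₀,r₀] such that: for every (y₀,z₀) ∈ [0,r₀] × [−r₀,r₀], setting x₀ = w(y₀,z₀), the system Z₁' = aZ₁ + h₁(Z), Z₂' = h₂(Z), Z₃' = cZ₃ + h₃(Z) with Z(0) = (x₀,y₀,z₀) has a solution Z = (Z₁,Z₂,Z₃) defined on [0,∞) with lim_{t→∞} Z(t) = (0,0,0), and moreover Z₁(t) = w(Z₂(t), Z₃(t)) for all t ≥ 0. -/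

import Mathlib

/-!
The graph of `w` is the set of initial points whose forward orbit never leaves a small box. On a
ball of radius `r` the nonlinearities are `ε`-Lipschitz with `ε` as small as desired, because their
gradients are `O(r)` (`exists_localHyp`). Two facts about the box
`[-r, r] × [0, r] × [-r, r]` carry the proof.

*Existence* (`exists_trapped`). Composing the vector field with the retraction `clip` onto the box
makes it bounded and globally Lipschitz, hence complete, with a flow continuous in the initial
point. An orbit that reaches `x ≥ r` or `x ≤ -r` stays there, since `a > 0` dominates `h₁`. So for
fixed `(y, z)` the initial values `x` whose orbits cross `r`, and those whose orbits cross `-r`, form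
two disjoint nonempty open sets; the line being connected, some `x` lies in neither. The other faces
are not crossed: `h₂ ≤ 0` and `h₂` vanishes at `y = 0`, while `c < 0` dominates `h₃`. On such an
orbit the clipped field is the original one.

*Uniqueness* (`cone`). If `Z`, `W` are two orbits trapped in the box and `d = Z - W`, then
`V = d₁² - d₂² - d₃²` satisfies `V' ≥ a V`, so a positive value of `V` would grow exponentially,
which boundedness forbids. Hence `|d₁| ≤ √(d₂² + d₃²)` at all times. At `t = 0` this says that the
`x` found above is a `1`-Lipschitz function `w` of `(y, z)`; applied to a time translate of a trapped
orbit, it gives the invariance `Z₁ = w (Z₂, Z₃)`; applied to the zero orbit, it bounds `Z₁` by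
`Z₂` and `Z₃`. Then `Z₂` decreases to `0` because `Z₂' ≤ -C Z₂ ^ p`, `Z₃ ^ 2` tends to `0` because
it satisfies `q' ≤ c q + o(1)`, and `Z₁` follows.
-/

open Filter Set Real MeasureTheory
open scoped Topology

noncomputable section

/-- The open Euclidean ball of radius `δ` centred at the origin in `ℝ³ = ℝ × ℝ × ℝ`. -/
def ball3 (δ : ℝ) : Set (ℝ × ℝ × ℝ) :=
  {ξ | ξ.1 ^ 2 + ξ.2.1 ^ 2 + ξ.2.2 ^ 2 < δ ^ 2}

/-- The Euclidean norm of the gradient of `h : ℝ³ → ℝ` at `ξ`. -/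
def gradNorm (h : ℝ × ℝ × ℝ → ℝ) (ξ : ℝ × ℝ × ℝ) : ℝ :=
  Real.sqrt ((fderiv ℝ h ξ (1, 0, 0)) ^ 2 + (fderiv ℝ h ξ (0, 1, 0)) ^ 2 +
    (fderiv ℝ h ξ (0, 0, 1)) ^ 2)

/-- The hypotheses of the center-stable manifold theorem on `h₁, h₂, h₃`. -/
def CSHyp (δ : ℝ) (h₁ h₂ h₃ : ℝ × ℝ × ℝ → ℝ) (C₁ p : ℝ) : Prop :=
  ContDiffOn ℝ 1 h₁ (ball3 δ) ∧ ContDiffOn ℝ 1 h₂ (ball3 δ) ∧ ContDiffOn ℝ 1 h₃ (ball3 δ) ∧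
  (∀ ξ ∈ ball3 δ, |h₁ ξ| + |h₂ ξ| + |h₃ ξ| ≤ C₁ * (ξ.1 ^ 2 + ξ.2.1 ^ 2 + ξ.2.2 ^ 2)) ∧
  (∀ ξ ∈ ball3 δ,
    gradNorm h₁ ξ + gradNorm h₂ ξ + gradNorm h₃ ξ ≤ C₁ * (|ξ.1| + |ξ.2.1| + |ξ.2.2|)) ∧
  (∀ ξ ∈ ball3 δ, h₂ ξ ≤ -C₁ * |ξ.2.1| ^ p) ∧
  (∀ x z : ℝ, (x, (0 : ℝ), z) ∈ ball3 δ → h₂ (x, 0, z) = 0)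

/-- The rectangle `[0, r₀] × [-r₀, r₀]`. -/
def rect (r₀ : ℝ) : Set (ℝ × ℝ) := Set.Icc (0 : ℝ) r₀ ×ˢ Set.Icc (-r₀) r₀

/-! ### Ordinary differential equations with a globally Lipschitz field -/

/-- The Picard–Lindelöf theorem on `[-(n + 1), n + 1]` applies for every `n`, because the field is
bounded on the whole space; by uniqueness the solutions on these intervals glue. -/
theorem exists_global_sol {E : Type*} [NormedAddCommGroup E] [NormedSpace ℝ E] [CompleteSpace E]
    {G : E → E} {K : NNReal} (hG : LipschitzWith K G) {M : NNReal} (hM : ∀ x, ‖G x‖ ≤ M) (x₀ : E) :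
    ∃ Z : ℝ → E, Z 0 = x₀ ∧ ∀ t, HasDerivAt Z (G (Z t)) t := by
  have loc : ∀ n : ℕ, ∃ α : ℝ → E, α 0 = x₀ ∧
      ∀ t ∈ Ioo (-(n + 1 : ℝ)) (n + 1), HasDerivAt α (G (α t)) t := by
    intro n
    have hn : (0 : ℝ) ≤ n + 1 := by positivity
    have h0 : (0 : ℝ) ∈ Icc (-(n + 1 : ℝ)) (n + 1) := ⟨by linarith, hn⟩
    have pl : IsPicardLindelof (fun _ : ℝ => G) (⟨0, h0⟩ : Icc (-(n + 1 : ℝ)) (n + 1)) x₀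
        (M * (n + 1)) 0 M K :=
      IsPicardLindelof.of_time_independent (fun x _ => hM x) hG.lipschitzOnWith (by simp)
    obtain ⟨α, h1, h2⟩ := pl.exists_eq_forall_mem_Icc_hasDerivWithinAt₀
    exact ⟨α, h1, fun t ht => (h2 t (Ioo_subset_Icc_self ht)).hasDerivAt (Icc_mem_nhds ht.1 ht.2)⟩
  choose α hα0 hα using loc
  have agree : ∀ m n : ℕ, m ≤ n → EqOn (α m) (α n) (Ioo (-(m + 1 : ℝ)) (m + 1)) := by
    intro m n hmn
    have hmn' : (m : ℝ) ≤ n := by exact_mod_cast hmn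
    have hm : (0 : ℝ) ≤ m := by positivity
    refine ODE_solution_unique_of_mem_Ioo (v := fun _ => G) (s := fun _ => univ) (K := K) (t₀ := 0)
      (fun t _ => hG.lipschitzOnWith) ⟨by linarith, by linarith⟩
      (fun t ht => ⟨hα m t ht, trivial⟩)
      (fun t ht => ⟨hα n t ⟨by linarith [ht.1], by linarith [ht.2]⟩, trivial⟩) ?_
    rw [hα0, hα0]
  have key : ∀ n : ℕ, ∀ t ∈ Ioo (-(n + 1 : ℝ)) (n + 1), α ⌈|t|⌉₊ t = α n t := by
    intro n t ht
    have h1 : |t| ≤ ⌈|t|⌉₊ := Nat.le_ceil _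
    have h2 := abs_le.1 h1
    rcases le_total ⌈|t|⌉₊ n with h | h
    · exact agree _ _ h ⟨by linarith, by linarith⟩
    · exact (agree _ _ h ht).symm
  refine ⟨fun t => α ⌈|t|⌉₊ t, by simp [hα0], fun t => ?_⟩
  obtain ⟨n, hn⟩ := exists_nat_ge |t|
  have h2 := abs_le.1 hn
  have ht : t ∈ Ioo (-(n + 1 : ℝ)) (n + 1) := ⟨by linarith, by linarith⟩
  have := hα n t ht
  rw [← key n t ht] at this
  refine this.congr_of_eventuallyEq ?_
  filter_upwards [Ioo_mem_nhds ht.1 ht.2] with s hs using key n s hs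

theorem continuous_dependence {E : Type*} [NormedAddCommGroup E] [NormedSpace ℝ E]
    {G : E → E} {K : NNReal} (hG : LipschitzWith K G) {Φ : E → ℝ → E}
    (h0 : ∀ x, Φ x 0 = x) (hΦ : ∀ x t, HasDerivAt (Φ x) (G (Φ x t)) t) {t : ℝ} (ht : 0 ≤ t) :
    Continuous fun x => Φ x t := by
  have : LipschitzWith (Real.toNNReal (exp (K * t))) fun x => Φ x t := by
    refine LipschitzWith.of_dist_le_mul fun x y => ?_
    rw [Real.coe_toNNReal _ (exp_pos _).le, mul_comm]
    have := dist_le_of_trajectories_ODE (v := fun _ => G) (f := Φ x) (g := Φ y) (a := 0) (b := t)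
      (δ := dist x y) (fun _ => hG)
      (fun s _ => (hΦ x s).continuousAt.continuousWithinAt) (fun s _ => (hΦ x s).hasDerivWithinAt)
      (fun s _ => (hΦ y s).continuousAt.continuousWithinAt) (fun s _ => (hΦ y s).hasDerivWithinAt)
      (by rw [h0, h0]) t ⟨ht, le_rfl⟩
    simpa using this
  exact this.continuous

/-! ### Differential inequalities on a half-line -/

/-- If `f' < 0` whenever `f = B`, then `f` cannot cross the level `B` upwards. -/
theorem fence {f f' : ℝ → ℝ} {t₀ B : ℝ} (hf : ∀ t, t₀ ≤ t → HasDerivAt f (f' t) t)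
    (h0 : f t₀ ≤ B) (hB : ∀ t, t₀ ≤ t → f t = B → f' t < 0) : ∀ t, t₀ ≤ t → f t ≤ B := by
  intro t ht
  exact image_le_of_deriv_right_lt_deriv_boundary' (f := f) (f' := f') (B := fun _ => B)
    (B' := fun _ => 0) (a := t₀) (b := t)
    (fun s hs => (hf s hs.1).continuousAt.continuousWithinAt)
    (fun s hs => (hf s hs.1).hasDerivWithinAt) h0 continuousOn_const
    (fun s _ => hasDerivWithinAt_const ..) (fun s hs h => hB s hs.1 h) ⟨ht, le_rfl⟩

theorem antitone_of_deriv {f f' : ℝ → ℝ} {t₀ : ℝ} (hf : ∀ t, t₀ ≤ t → HasDerivAt f (f' t) t)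
    (h : ∀ t, t₀ ≤ t → f' t ≤ 0) : AntitoneOn f (Ici t₀) := by
  refine antitoneOn_of_deriv_nonpos (convex_Ici _)
    (fun s hs => (hf s hs).continuousAt.continuousWithinAt)
    (fun s hs => ?_) (fun s hs => ?_) <;> rw [interior_Ici] at hs
  · exact (hf s (le_of_lt hs)).differentiableAt.differentiableWithinAt
  · rw [(hf s (le_of_lt hs)).deriv]; exact h s (le_of_lt hs)

/-- Once `g ≤ κ η / 2`, the function `exp (κ t) (q t - η / 2)` decreases, so `q` is eventually
below `η`. -/
theorem tendsto_zero_of_deriv_le {q q' g : ℝ → ℝ} {κ : ℝ} (hκ : 0 < κ)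
    (hq : ∀ t, 0 ≤ t → HasDerivAt q (q' t) t) (hq0 : ∀ t, 0 ≤ q t)
    (hle : ∀ t, 0 ≤ t → q' t ≤ -κ * q t + g t) (hg : Tendsto g atTop (𝓝 0)) :
    Tendsto q atTop (𝓝 0) := by
  rw [Metric.tendsto_atTop]
  intro η hη
  obtain ⟨T, hT0, hT⟩ : ∃ T, 0 ≤ T ∧ ∀ t, T ≤ t → g t ≤ κ * (η / 2) := by
    have := (hg.eventually_le_const (show 0 < κ * (η / 2) by positivity)).and (eventually_ge_atTop 0)
    obtain ⟨T, hT⟩ := eventually_atTop.1 this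
    exact ⟨T, (hT T le_rfl).2, fun t ht => (hT t ht).1⟩
  have hd : ∀ t, T ≤ t → HasDerivAt (fun t => exp (κ * t) * (q t - η / 2))
      (exp (κ * t) * (κ * (q t - η / 2) + q' t)) t := by
    intro t ht
    have h1 : HasDerivAt (fun t : ℝ => exp (κ * t)) (exp (κ * t) * κ) t := by
      simpa using ((hasDerivAt_id t).const_mul κ).exp
    exact (h1.mul ((hq t (hT0.trans ht)).sub_const (η / 2))).congr_deriv (by ring)
  have hanti := antitone_of_deriv hd (fun t ht => by
    have h1 := hle t (hT0.trans ht)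
    have h2 := hT t ht
    exact mul_nonpos_of_nonneg_of_nonpos (exp_pos _).le (by nlinarith))
  have hlim : Tendsto (fun t => exp (κ * T) * (q T - η / 2) * exp (-(κ * t))) atTop (𝓝 0) := by
    have : Tendsto (fun t : ℝ => exp (-(κ * t))) atTop (𝓝 0) :=
      tendsto_exp_neg_atTop_nhds_zero.comp (tendsto_id.const_mul_atTop hκ)
    simpa using this.const_mul (exp (κ * T) * (q T - η / 2))
  obtain ⟨S, hS⟩ := eventually_atTop.1 (hlim.eventually_lt_const (show 0 < η / 2 by positivity))
  refine ⟨max S T, fun t ht => ?_⟩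
  have h1 := hS t ((le_max_left _ _).trans ht)
  have h2 : T ≤ t := (le_max_right _ _).trans ht
  have h3 := hanti (mem_Ici.2 le_rfl) (mem_Ici.2 h2) h2
  have h4 : q t - η / 2 ≤ exp (κ * T) * (q T - η / 2) * exp (-(κ * t)) := by
    calc q t - η / 2 = (exp (κ * t) * (q t - η / 2)) * exp (-(κ * t)) := by
          rw [mul_right_comm, ← exp_add]; simp
      _ ≤ _ := mul_le_mul_of_nonneg_right h3 (exp_pos _).le
  rw [Real.dist_eq, sub_zero, abs_of_nonneg (hq0 t)]
  linarith

/-! ### Smallness of the nonlinearity near the origin -/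

/-- What the proof uses of the nonlinearities on the closed ball of radius `r` for the sup norm of
`ℝ × ℝ × ℝ`: they vanish at `0`, are `ε`-Lipschitz for that norm, and `h₂` vanishes at `ξ₂ = 0` and
satisfies the decay condition. -/
structure LocalHyp (r ε C p : ℝ) (h₁ h₂ h₃ : ℝ × ℝ × ℝ → ℝ) : Prop where
  lip₁ : ∀ ξ η : ℝ × ℝ × ℝ, ‖ξ‖ ≤ r → ‖η‖ ≤ r → |h₁ ξ - h₁ η| ≤ ε * ‖ξ - η‖
  lip₂ : ∀ ξ η : ℝ × ℝ × ℝ, ‖ξ‖ ≤ r → ‖η‖ ≤ r → |h₂ ξ - h₂ η| ≤ ε * ‖ξ - η‖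
  lip₃ : ∀ ξ η : ℝ × ℝ × ℝ, ‖ξ‖ ≤ r → ‖η‖ ≤ r → |h₃ ξ - h₃ η| ≤ ε * ‖ξ - η‖
  zero₁ : h₁ 0 = 0
  zero₂ : h₂ 0 = 0
  zero₃ : h₃ 0 = 0
  center : ∀ x z : ℝ, ‖(x, (0 : ℝ), z)‖ ≤ r → h₂ (x, 0, z) = 0
  decay : ∀ ξ : ℝ × ℝ × ℝ, ‖ξ‖ ≤ r → h₂ ξ ≤ -C * |ξ.2.1| ^ p

theorem norm_le_iff3 {x y z r : ℝ} : ‖(x, y, z)‖ ≤ r ↔ |x| ≤ r ∧ |y| ≤ r ∧ |z| ≤ r := by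
  simp [Prod.norm_def]

theorem gradNorm_nonneg (h : ℝ × ℝ × ℝ → ℝ) (ξ : ℝ × ℝ × ℝ) : 0 ≤ gradNorm h ξ := sqrt_nonneg _

theorem norm_fderiv_le (h : ℝ × ℝ × ℝ → ℝ) (ξ : ℝ × ℝ × ℝ) :
    ‖fderiv ℝ h ξ‖ ≤ 3 * gradNorm h ξ := by
  refine ContinuousLinearMap.opNorm_le_bound _ (by positivity [gradNorm_nonneg h ξ]) ?_
  rintro ⟨x, y, z⟩
  obtain ⟨hx, hy, hz⟩ := norm_le_iff3.1 (le_refl ‖(x, y, z)‖)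
  set N := ‖(x, y, z)‖
  have e : ((x, y, z) : ℝ × ℝ × ℝ) = x • (1, 0, 0) + y • (0, 1, 0) + z • (0, 0, 1) := by simp
  rw [e]
  simp only [map_add, map_smul, smul_eq_mul]
  have hN : 0 ≤ N := norm_nonneg _
  unfold gradNorm
  set A := fderiv ℝ h ξ (1, 0, 0)
  set B := fderiv ℝ h ξ (0, 1, 0)
  set C := fderiv ℝ h ξ (0, 0, 1)
  have hA : |A| ≤ √(A ^ 2 + B ^ 2 + C ^ 2) := abs_le_sqrt (by nlinarith [sq_nonneg B, sq_nonneg C])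
  have hB : |B| ≤ √(A ^ 2 + B ^ 2 + C ^ 2) := abs_le_sqrt (by nlinarith [sq_nonneg A, sq_nonneg C])
  have hC : |C| ≤ √(A ^ 2 + B ^ 2 + C ^ 2) := abs_le_sqrt (by nlinarith [sq_nonneg B, sq_nonneg A])
  set S := √(A ^ 2 + B ^ 2 + C ^ 2)
  calc ‖x * A + y * B + z * C‖ ≤ |x| * |A| + |y| * |B| + |z| * |C| := by
        rw [← abs_mul, ← abs_mul, ← abs_mul]; exact abs_add_three _ _ _
    _ ≤ N * S + N * S + N * S := by gcongr
    _ = _ := by ring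

/-- Shrinking the ball makes the Lipschitz constant as small as wanted, the gradients being bounded
by `3 C₁ r` on the ball of radius `r`. -/
theorem exists_localHyp {δ : ℝ} (hδ : 0 < δ) {h₁ h₂ h₃ : ℝ × ℝ × ℝ → ℝ}
    {C₁ p : ℝ} (hC₁ : 0 < C₁) (H : CSHyp δ h₁ h₂ h₃ C₁ p) {ε : ℝ} (hε : 0 < ε) :
    ∃ r, 0 < r ∧ r < δ / 2 ∧ LocalHyp r ε C₁ p h₁ h₂ h₃ := by
  obtain ⟨c1, c2, c3, hb, hg, hd, hc⟩ := H
  -- `r ≤ δ / 4` puts the sup-norm ball inside `ball3 δ`; the factor `9` is `3` from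
  -- `norm_fderiv_le` times `3` from `|ξ₁| + |ξ₂| + |ξ₃| ≤ 3 r`.
  set r := min (δ / 4) (ε / (9 * C₁)) with hr
  have hr0 : 0 < r := by positivity
  have hr1 : r ≤ δ / 4 := min_le_left _ _
  have hr2 : 9 * C₁ * r ≤ ε := by
    have := min_le_right (δ / 4) (ε / (9 * C₁))
    rw [le_div_iff₀ (by positivity)] at this
    rw [← hr] at this; linarith
  have hopen : IsOpen (ball3 δ) := isOpen_lt (by fun_prop) (by fun_prop)
  have hsub : ∀ ξ : ℝ × ℝ × ℝ, ‖ξ‖ ≤ r → ξ ∈ ball3 δ := by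
    rintro ⟨x, y, z⟩ h
    obtain ⟨hx, hy, hz⟩ := norm_le_iff3.1 h
    have h1 := sq_le_sq' (abs_le.1 hx).1 (abs_le.1 hx).2
    have h2 := sq_le_sq' (abs_le.1 hy).1 (abs_le.1 hy).2
    have h3 := sq_le_sq' (abs_le.1 hz).1 (abs_le.1 hz).2
    change x ^ 2 + y ^ 2 + z ^ 2 < δ ^ 2
    nlinarith
  have hgr : ∀ ξ : ℝ × ℝ × ℝ, ‖ξ‖ ≤ r →
      gradNorm h₁ ξ + gradNorm h₂ ξ + gradNorm h₃ ξ ≤ 3 * C₁ * r := by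
    rintro ⟨x, y, z⟩ h
    refine (hg _ (hsub _ h)).trans ?_
    obtain ⟨hx, hy, hz⟩ := norm_le_iff3.1 h
    simp only
    nlinarith
  have hlip : ∀ h : ℝ × ℝ × ℝ → ℝ, ContDiffOn ℝ 1 h (ball3 δ) →
      (∀ ξ : ℝ × ℝ × ℝ, ‖ξ‖ ≤ r → gradNorm h ξ ≤ 3 * C₁ * r) →
      ∀ ξ η : ℝ × ℝ × ℝ, ‖ξ‖ ≤ r → ‖η‖ ≤ r → |h ξ - h η| ≤ ε * ‖ξ - η‖ := by
    intro h hcd hgn ξ η hξ hη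
    refine Convex.norm_image_sub_le_of_norm_fderiv_le (𝕜 := ℝ) (f := h) (C := ε)
      (s := Metric.closedBall (0 : ℝ × ℝ × ℝ) r) (x := η) (y := ξ)
      (fun ζ hζ => ?_) (fun ζ hζ => ?_) (convex_closedBall _ _)
      (by simpa using hη) (by simpa using hξ)
    · exact (hcd.differentiableOn one_ne_zero).differentiableAt
        (hopen.mem_nhds (hsub ζ (by simpa using hζ)))
    · have := hgn ζ (by simpa using hζ)
      have := norm_fderiv_le h ζ
      linarith
  have h0 : (0 : ℝ × ℝ × ℝ) ∈ ball3 δ := hsub 0 (by simpa using hr0.le)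
  have hz := hb 0 h0
  simp only [Prod.fst_zero, Prod.snd_zero] at hz
  refine ⟨r, hr0, by linarith, ⟨hlip h₁ c1 ?_, hlip h₂ c2 ?_, hlip h₃ c3 ?_, ?_, ?_, ?_,
    fun x z h => hc x z (hsub _ h), fun ξ h => hd ξ (hsub ξ h)⟩⟩
  · intro ξ h; linarith [hgr ξ h, gradNorm_nonneg h₁ ξ, gradNorm_nonneg h₂ ξ, gradNorm_nonneg h₃ ξ]
  · intro ξ h; linarith [hgr ξ h, gradNorm_nonneg h₁ ξ, gradNorm_nonneg h₂ ξ, gradNorm_nonneg h₃ ξ]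
  · intro ξ h; linarith [hgr ξ h, gradNorm_nonneg h₁ ξ, gradNorm_nonneg h₂ ξ, gradNorm_nonneg h₃ ξ]
  all_goals
    apply abs_eq_zero.1
    linarith [abs_nonneg (h₁ 0), abs_nonneg (h₂ 0), abs_nonneg (h₃ 0)]

/-! ### The vector field and the clipping onto the box -/

/-- The right-hand side `(a ξ₁ + h₁ ξ, h₂ ξ, c ξ₃ + h₃ ξ)` of the system. -/
def vfield (a c : ℝ) (h₁ h₂ h₃ : ℝ × ℝ × ℝ → ℝ) (ξ : ℝ × ℝ × ℝ) : ℝ × ℝ × ℝ :=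
  (a * ξ.1 + h₁ ξ, h₂ ξ, c * ξ.2.2 + h₃ ξ)

/-- The box `[-r, r] × [0, r] × [-r, r]`. The center coordinate is restricted to nonnegative values,
the side from which `0` is attracting for `y' ≤ -C |y| ^ p`. -/
def box (r : ℝ) : Set (ℝ × ℝ × ℝ) := Icc (-r) r ×ˢ Icc 0 r ×ˢ Icc (-r) r

/-- The coordinatewise retraction of `ℝ³` onto `box r`. -/
def clip (r : ℝ) (ξ : ℝ × ℝ × ℝ) : ℝ × ℝ × ℝ :=
  (max (min ξ.1 r) (-r), max (min ξ.2.1 r) 0, max (min ξ.2.2 r) (-r))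

theorem norm_le_of_mem_box {r : ℝ} {ξ : ℝ × ℝ × ℝ} (h : ξ ∈ box r) : ‖ξ‖ ≤ r := by
  obtain ⟨x, y, z⟩ := ξ
  obtain ⟨hx, hy, hz⟩ := h
  exact norm_le_iff3.2 ⟨abs_le.2 hx, abs_le.2 ⟨by linarith [hy.1, hy.2], hy.2⟩, abs_le.2 hz⟩

theorem clip_mem {r : ℝ} (hr : 0 < r) (ξ : ℝ × ℝ × ℝ) : clip r ξ ∈ box r := by
  refine ⟨⟨le_max_right _ _, max_le (min_le_right _ _) (by linarith)⟩,
    ⟨le_max_right _ _, max_le (min_le_right _ _) hr.le⟩,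
    ⟨le_max_right _ _, max_le (min_le_right _ _) (by linarith)⟩⟩

theorem clip_of_mem {r : ℝ} {ξ : ℝ × ℝ × ℝ} (h : ξ ∈ box r) : clip r ξ = ξ := by
  obtain ⟨x, y, z⟩ := ξ
  obtain ⟨hx, hy, hz⟩ := h
  simp only [clip]
  rw [min_eq_left hx.2, max_eq_left hx.1, min_eq_left hy.2, max_eq_left hy.1, min_eq_left hz.2,
    max_eq_left hz.1]

theorem norm_clip_sub_le (r : ℝ) (ξ η : ℝ × ℝ × ℝ) : ‖clip r ξ - clip r η‖ ≤ ‖ξ - η‖ := by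
  have key : ∀ x y b : ℝ, |max (min x r) b - max (min y r) b| ≤ |x - y| := fun x y b =>
    (abs_max_sub_max_le_abs _ _ _).trans (by simpa using abs_min_sub_min_le_max x r y r)
  obtain ⟨x, y, z⟩ := ξ
  obtain ⟨x', y', z'⟩ := η
  obtain ⟨hx, hy, hz⟩ := norm_le_iff3.1 (le_refl ‖(x - x', y - y', z - z')‖)
  exact norm_le_iff3.2 ⟨(key _ _ _).trans hx, (key _ _ _).trans hy, (key _ _ _).trans hz⟩

section

variable {r ε C p a c : ℝ} {h₁ h₂ h₃ : ℝ × ℝ × ℝ → ℝ}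

theorem norm_vfield_sub_le (H : LocalHyp r ε C p h₁ h₂ h₃) {ξ η : ℝ × ℝ × ℝ}
    (hξ : ‖ξ‖ ≤ r) (hη : ‖η‖ ≤ r) :
    ‖vfield a c h₁ h₂ h₃ ξ - vfield a c h₁ h₂ h₃ η‖ ≤ (|a| + |c| + ε) * ‖ξ - η‖ := by
  have l1 := H.lip₁ ξ η hξ hη
  have l2 := H.lip₂ ξ η hξ hη
  have l3 := H.lip₃ ξ η hξ hη
  obtain ⟨hx, hy, hz⟩ := norm_le_iff3.1 (le_refl ‖(ξ.1 - η.1, ξ.2.1 - η.2.1, ξ.2.2 - η.2.2)‖)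
  have e : (ξ.1 - η.1, ξ.2.1 - η.2.1, ξ.2.2 - η.2.2) = ξ - η := rfl
  rw [e] at hx hy hz
  have hN := norm_nonneg (ξ - η)
  have ha := mul_nonneg (abs_nonneg a) hN
  have hc := mul_nonneg (abs_nonneg c) hN
  refine norm_le_iff3.2 ⟨?_, ?_, ?_⟩
  · calc |a * ξ.1 + h₁ ξ - (a * η.1 + h₁ η)| = |a * (ξ.1 - η.1) + (h₁ ξ - h₁ η)| := by ring_nf
      _ ≤ |a| * |ξ.1 - η.1| + |h₁ ξ - h₁ η| := by rw [← abs_mul]; exact abs_add_le _ _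
      _ ≤ |a| * ‖ξ - η‖ + ε * ‖ξ - η‖ := by gcongr
      _ ≤ _ := by linarith
  · refine l2.trans ?_
    linarith
  · calc |c * ξ.2.2 + h₃ ξ - (c * η.2.2 + h₃ η)| = |c * (ξ.2.2 - η.2.2) + (h₃ ξ - h₃ η)| := by
          ring_nf
      _ ≤ |c| * |ξ.2.2 - η.2.2| + |h₃ ξ - h₃ η| := by rw [← abs_mul]; exact abs_add_le _ _
      _ ≤ |c| * ‖ξ - η‖ + ε * ‖ξ - η‖ := by gcongr
      _ ≤ _ := by linarith

theorem vfield_zero (H : LocalHyp r ε C p h₁ h₂ h₃) : vfield a c h₁ h₂ h₃ 0 = 0 := by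
  simp [vfield, H.zero₁, H.zero₂, H.zero₃]

/-! ### The cone condition -/

/-- Two orbits trapped in the box differ by a vector of the cone `d₁² ≤ d₂² + d₃²`: otherwise
`d₁² - d₂² - d₃²` would grow at least like `exp (a t)`. -/
theorem cone (H : LocalHyp r ε C p h₁ h₂ h₃) (ha : 0 < a) (hc : c < 0)
    (hεa : 6 * ε ≤ a) {Z W : ℝ → ℝ × ℝ × ℝ}
    (hZ : ∀ t, 0 ≤ t → HasDerivAt Z (vfield a c h₁ h₂ h₃ (Z t)) t)
    (hW : ∀ t, 0 ≤ t → HasDerivAt W (vfield a c h₁ h₂ h₃ (W t)) t)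
    (bZ : ∀ t, 0 ≤ t → Z t ∈ box r) (bW : ∀ t, 0 ≤ t → W t ∈ box r) {t : ℝ} (ht : 0 ≤ t) :
    ((Z t).1 - (W t).1) ^ 2 ≤ ((Z t).2.1 - (W t).2.1) ^ 2 + ((Z t).2.2 - (W t).2.2) ^ 2 := by
  -- `exp (-a t) V t` is nondecreasing; its negative is used to match `antitone_of_deriv`.
  set V : ℝ → ℝ := fun t =>
    ((Z t).1 - (W t).1) ^ 2 - ((Z t).2.1 - (W t).2.1) ^ 2 - ((Z t).2.2 - (W t).2.2) ^ 2 with hV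
  have hd : ∀ t, 0 ≤ t → HasDerivAt (fun t => -(exp (-(a * t)) * V t))
      (-(exp (-(a * t)) * (-a * V t +
        (2 * ((Z t).1 - (W t).1) * (a * ((Z t).1 - (W t).1) + (h₁ (Z t) - h₁ (W t)))
        - 2 * ((Z t).2.1 - (W t).2.1) * (h₂ (Z t) - h₂ (W t))
        - 2 * ((Z t).2.2 - (W t).2.2) *
          (c * ((Z t).2.2 - (W t).2.2) + (h₃ (Z t) - h₃ (W t))))))) t := by
    intro t ht
    have e : HasDerivAt (fun t : ℝ => exp (-(a * t))) (exp (-(a * t)) * -a) t := by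
      simpa using ((hasDerivAt_id t).const_mul a).neg.exp
    have z := hZ t ht
    have w := hW t ht
    have z1 : HasDerivAt (fun t => (Z t).1) _ t := z.fst
    have w1 : HasDerivAt (fun t => (W t).1) _ t := w.fst
    have z2 : HasDerivAt (fun t => (Z t).2.1) _ t := z.snd.fst
    have w2 : HasDerivAt (fun t => (W t).2.1) _ t := w.snd.fst
    have z3 : HasDerivAt (fun t => (Z t).2.2) _ t := z.snd.snd
    have w3 : HasDerivAt (fun t => (W t).2.2) _ t := w.snd.snd
    have d1 := (z1.sub w1).pow 2
    have d2 := (z2.sub w2).pow 2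
    have d3 := (z3.sub w3).pow 2
    refine (e.mul ((d1.sub d2).sub d3)).neg.congr_deriv ?_
    simp only [hV, vfield, Pi.sub_apply, Pi.pow_apply]
    push_cast
    ring
  have hanti := antitone_of_deriv hd (fun t ht => by
    rw [neg_nonpos]
    refine mul_nonneg (exp_pos _).le ?_
    have nZ := norm_le_of_mem_box (bZ t ht)
    have nW := norm_le_of_mem_box (bW t ht)
    have l1 := H.lip₁ _ _ nZ nW
    have l2 := H.lip₂ _ _ nZ nW
    have l3 := H.lip₃ _ _ nZ nW
    obtain ⟨hx, hy, hz⟩ := norm_le_iff3.1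
      (le_refl ‖((Z t).1 - (W t).1, (Z t).2.1 - (W t).2.1, (Z t).2.2 - (W t).2.2)‖)
    have e : ((Z t).1 - (W t).1, (Z t).2.1 - (W t).2.1, (Z t).2.2 - (W t).2.2) = Z t - W t := rfl
    have hNsq : ‖Z t - W t‖ ^ 2 ≤ ((Z t).1 - (W t).1) ^ 2 + ((Z t).2.1 - (W t).2.1) ^ 2
        + ((Z t).2.2 - (W t).2.2) ^ 2 := by
      rw [← e, ← sqrt_le_sqrt_iff (by positivity), sqrt_sq (norm_nonneg _)]
      exact norm_le_iff3.2 ⟨abs_le_sqrt (by nlinarith [sq_nonneg ((Z t).2.1 - (W t).2.1), sq_nonneg ((Z t).2.2 - (W t).2.2)]),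
        abs_le_sqrt (by nlinarith [sq_nonneg ((Z t).1 - (W t).1), sq_nonneg ((Z t).2.2 - (W t).2.2)]),
        abs_le_sqrt (by nlinarith [sq_nonneg ((Z t).1 - (W t).1), sq_nonneg ((Z t).2.1 - (W t).2.1)])⟩
    rw [e] at hx hy hz
    have hN := norm_nonneg (Z t - W t)
    have prod : ∀ u v : ℝ, |u| ≤ ‖Z t - W t‖ → |v| ≤ ε * ‖Z t - W t‖ →
        |u * v| ≤ ε * ‖Z t - W t‖ ^ 2 := by
      intro u v hu hv
      rw [abs_mul]
      calc |u| * |v| ≤ ‖Z t - W t‖ * (ε * ‖Z t - W t‖) := by gcongr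
        _ = _ := by ring
    have p1 := (abs_le.1 (prod _ _ hx l1)).1
    have p2 := (abs_le.1 (prod _ _ hy l2)).2
    have p3 := (abs_le.1 (prod _ _ hz l3)).2
    have q : ε * ‖Z t - W t‖ ^ 2 ≤ a / 6 * (((Z t).1 - (W t).1) ^ 2 + ((Z t).2.1 - (W t).2.1) ^ 2
        + ((Z t).2.2 - (W t).2.2) ^ 2) := by
      calc ε * ‖Z t - W t‖ ^ 2 ≤ a / 6 * ‖Z t - W t‖ ^ 2 := by gcongr; linarith
        _ ≤ _ := by gcongr
    have hcc : c * ((Z t).2.2 - (W t).2.2) ^ 2 ≤ 0 :=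
      mul_nonpos_of_nonpos_of_nonneg hc.le (sq_nonneg _)
    simp only [hV]
    nlinarith)
  by_contra! hcon
  have hVt : 0 < V t := by simp only [hV]; linarith
  have hlim : Tendsto (fun s => exp (-(a * s)) * (2 * r) ^ 2) atTop (𝓝 0) := by
    have : Tendsto (fun t : ℝ => exp (-(a * t))) atTop (𝓝 0) :=
      tendsto_exp_neg_atTop_nhds_zero.comp (tendsto_id.const_mul_atTop ha)
    simpa using this.mul_const ((2 * r) ^ 2)
  have hpos : 0 < exp (-(a * t)) * V t := mul_pos (exp_pos _) hVt
  obtain ⟨s, hs, hts⟩ := ((hlim.eventually_lt_const hpos).and (eventually_ge_atTop t)).exists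
  have h1 := hanti (mem_Ici.2 ht) (mem_Ici.2 (ht.trans hts)) hts
  have h2 : V s ≤ (2 * r) ^ 2 := by
    have b1 := (bZ s (ht.trans hts)).1
    have b2 := (bW s (ht.trans hts)).1
    have : ((Z s).1 - (W s).1) ^ 2 ≤ (2 * r) ^ 2 :=
      sq_le_sq' (by linarith [b1.1, b2.2]) (by linarith [b1.2, b2.1])
    simp only [hV]
    nlinarith [sq_nonneg ((Z s).2.1 - (W s).2.1), sq_nonneg ((Z s).2.2 - (W s).2.2)]
  have h3 := mul_le_mul_of_nonneg_left h2 (exp_pos (-(a * s))).le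
  linarith

/-! ### Trapped orbits -/

/-- Above every `(y, z)` there is an `x` whose orbit stays in the box forever. -/
theorem exists_trapped (H : LocalHyp r ε C p h₁ h₂ h₃) (hr : 0 < r) (hC : 0 < C)
    (hε : 0 ≤ ε) (hεa : ε < a) (hεc : ε < -c) {y z : ℝ} (hy : y ∈ Icc 0 r) (hz : z ∈ Icc (-r) r) :
    ∃ (x : ℝ) (Z : ℝ → ℝ × ℝ × ℝ), Z 0 = (x, y, z) ∧
      (∀ t, 0 ≤ t → HasDerivAt Z (vfield a c h₁ h₂ h₃ (Z t)) t) ∧ ∀ t, 0 ≤ t → Z t ∈ box r := by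
  set F := vfield a c h₁ h₂ h₃ with hF
  set G : ℝ × ℝ × ℝ → ℝ × ℝ × ℝ := fun ξ => F (clip r ξ) with hG
  have hcn : ∀ ξ, ‖clip r ξ‖ ≤ r := fun ξ => norm_le_of_mem_box (clip_mem hr ξ)
  have hK0 : 0 ≤ |a| + |c| + ε := by positivity
  have hGL : LipschitzWith (Real.toNNReal (|a| + |c| + ε)) G := by
    refine LipschitzWith.of_dist_le_mul fun ξ η => ?_
    rw [Real.coe_toNNReal _ hK0, dist_eq_norm, dist_eq_norm]
    refine (norm_vfield_sub_le H (hcn ξ) (hcn η)).trans ?_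
    gcongr
    exact norm_clip_sub_le _ _ _
  have hGM : ∀ ξ, ‖G ξ‖ ≤ (Real.toNNReal ((|a| + |c| + ε) * r) : ℝ) := by
    intro ξ
    rw [Real.coe_toNNReal _ (by positivity)]
    have := norm_vfield_sub_le (a := a) (c := c) H (hcn ξ) (η := 0) (by simpa using hr.le)
    rw [vfield_zero H, sub_zero, sub_zero] at this
    exact this.trans (by gcongr; exact hcn ξ)
  choose Φ hΦ0 hΦ using fun ξ => exists_global_sol hGL hGM ξ
  have hcont : ∀ t, 0 ≤ t → Continuous fun x : ℝ => (Φ (x, y, z) t).1 := fun t ht =>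
    continuous_fst.comp ((continuous_dependence hGL hΦ0 hΦ ht).comp (by fun_prop))
  have hb1 : ∀ ξ, |h₁ (clip r ξ)| ≤ ε * r := fun ξ => by
    have := H.lip₁ _ 0 (hcn ξ) (by simpa using hr.le)
    rw [H.zero₁, sub_zero, sub_zero] at this
    exact this.trans (by gcongr; exact hcn ξ)
  have hb3 : ∀ ξ, |h₃ (clip r ξ)| ≤ ε * r := fun ξ => by
    have := H.lip₃ _ 0 (hcn ξ) (by simpa using hr.le)
    rw [H.zero₃, sub_zero, sub_zero] at this
    exact this.trans (by gcongr; exact hcn ξ)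
  have har : ε * r < a * r := by gcongr
  have hcr : ε * r < -c * r := by gcongr
  have d1 : ∀ x t, HasDerivAt (fun t => (Φ (x, y, z) t).1)
      (a * (clip r (Φ (x, y, z) t)).1 + h₁ (clip r (Φ (x, y, z) t))) t := fun x t => (hΦ _ t).fst
  have d2 : ∀ x t, HasDerivAt (fun t => (Φ (x, y, z) t).2.1) (h₂ (clip r (Φ (x, y, z) t))) t :=
    fun x t => (hΦ _ t).snd.fst
  have d3 : ∀ x t, HasDerivAt (fun t => (Φ (x, y, z) t).2.2)
      (c * (clip r (Φ (x, y, z) t)).2.2 + h₃ (clip r (Φ (x, y, z) t))) t :=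
    fun x t => (hΦ _ t).snd.snd
  -- The half-spaces `x ≥ r` and `x ≤ -r` are forward invariant for the clipped flow.
  have up : ∀ x t₀, r ≤ (Φ (x, y, z) t₀).1 → ∀ t, t₀ ≤ t → r ≤ (Φ (x, y, z) t).1 := by
    intro x t₀ h t ht
    have := fence (f := fun t => -(Φ (x, y, z) t).1) (B := -r) (fun t _ => (d1 x t).neg)
      (by linarith) (fun s _ hs => ?_) t ht
    · linarith
    · have e : (clip r (Φ (x, y, z) s)).1 = r := by
        have : (Φ (x, y, z) s).1 = r := by linarith
        simp only [clip, this, min_self]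
        exact max_eq_left (by linarith)
      rw [e]
      linarith [(abs_le.1 (hb1 (Φ (x, y, z) s))).1]
  have down : ∀ x t₀, (Φ (x, y, z) t₀).1 ≤ -r → ∀ t, t₀ ≤ t → (Φ (x, y, z) t).1 ≤ -r := by
    intro x t₀ h t ht
    refine fence (f := fun t => (Φ (x, y, z) t).1) (fun t _ => d1 x t) h (fun s _ hs => ?_) t ht
    have e : (clip r (Φ (x, y, z) s)).1 = -r := by
      have hs : (Φ (x, y, z) s).1 = -r := hs
      simp only [clip, hs]
      exact max_eq_right (min_le_left _ _)
    rw [e]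
    linarith [(abs_le.1 (hb1 (Φ (x, y, z) s))).2]
  -- `U` and `D` collect the initial values whose orbits cross `r`, respectively `-r`.
  obtain ⟨x, hx⟩ : ∃ x, ∀ t, 0 ≤ t → (Φ (x, y, z) t).1 ∈ Icc (-r) r := by
    by_contra! hcon
    set U : Set ℝ := ⋃ t ∈ Ici (0 : ℝ), {x | r < (Φ (x, y, z) t).1} with hU
    set D : Set ℝ := ⋃ t ∈ Ici (0 : ℝ), {x | (Φ (x, y, z) t).1 < -r} with hD
    have hUo : IsOpen U := isOpen_biUnion fun t ht => isOpen_lt continuous_const (hcont t ht)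
    have hDo : IsOpen D := isOpen_biUnion fun t ht => isOpen_lt (hcont t ht) continuous_const
    have hcov : (univ : Set ℝ) ⊆ U ∪ D := by
      intro x _
      obtain ⟨t, ht, hn⟩ := hcon x
      by_cases h : r < (Φ (x, y, z) t).1
      · exact Or.inl (mem_iUnion₂.2 ⟨t, ht, h⟩)
      · refine Or.inr (mem_iUnion₂.2 ⟨t, ht, ?_⟩)
        by_contra h'
        exact hn ⟨not_lt.1 h', not_lt.1 h⟩
    have hUn : (univ ∩ U).Nonempty :=
      ⟨2 * r, trivial, mem_iUnion₂.2 ⟨0, self_mem_Ici, by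
        change r < (Φ (2 * r, y, z) 0).1
        rw [hΦ0]; change r < 2 * r; linarith⟩⟩
    have hDn : (univ ∩ D).Nonempty :=
      ⟨-(2 * r), trivial, mem_iUnion₂.2 ⟨0, self_mem_Ici, by
        change (Φ (-(2 * r), y, z) 0).1 < -r
        rw [hΦ0]; change -(2 * r) < -r; linarith⟩⟩
    obtain ⟨x, -, hxU, hxD⟩ := isPreconnected_univ U D hUo hDo hcov hUn hDn
    obtain ⟨t, -, ht⟩ := mem_iUnion₂.1 hxU
    obtain ⟨s, -, hs⟩ := mem_iUnion₂.1 hxD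
    have ht : r < (Φ (x, y, z) t).1 := ht
    have hs : (Φ (x, y, z) s).1 < -r := hs
    rcases le_total t s with hts | hts
    · linarith [up x t ht.le s hts]
    · linarith [down x s hs.le t hts]
  have hy0 : ∀ t, 0 ≤ t → 0 ≤ (Φ (x, y, z) t).2.1 := by
    intro t ht
    -- The derivative of `Z₂` is only zero, not positive, where `Z₂ ≤ 0`; comparing with the
    -- slowly decreasing barrier `-(η / (1 + t)) (1 + s)` gives the strict inequality `fence` needs.
    refine le_of_forall_pos_le_add fun η hη => ?_
    have hη' : 0 < η / (1 + t) := by positivity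
    have := fence (f := fun s => -(Φ (x, y, z) s).2.1 - η / (1 + t) * (1 + s)) (B := 0) (t₀ := 0)
      (fun s _ => (d2 x s).neg.sub (((hasDerivAt_id s).const_add 1).const_mul (η / (1 + t))))
      ?_ ?_ t ht
    · have h2 : η / (1 + t) * (1 + t) = η := by field_simp
      linarith
    · rw [hΦ0]
      change -y - _ ≤ 0
      linarith [hy.1]
    · intro s hs0 hs
      have h1 : 0 < η / (1 + t) * (1 + s) := by positivity
      have h2 : (Φ (x, y, z) s).2.1 ≤ 0 := by linarith
      have h3 : (clip r (Φ (x, y, z) s)).2.1 = 0 :=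
        max_eq_right ((min_le_left _ _).trans h2)
      have h4 : h₂ (clip r (Φ (x, y, z) s)) = 0 := by
        have := H.center (clip r (Φ (x, y, z) s)).1 (clip r (Φ (x, y, z) s)).2.2
        have e : ((clip r (Φ (x, y, z) s)).1, (0 : ℝ), (clip r (Φ (x, y, z) s)).2.2) =
            clip r (Φ (x, y, z) s) := by
          rw [← h3]
        rw [e] at this
        exact this (hcn _)
      rw [h4]
      linarith
  have hyr : ∀ t, 0 ≤ t → (Φ (x, y, z) t).2.1 ≤ r := by
    intro t ht
    have := antitone_of_deriv (t₀ := 0) (fun t _ => d2 x t) (fun s _ => by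
      refine (H.decay _ (hcn _)).trans ?_
      have := rpow_nonneg (abs_nonneg (clip r (Φ (x, y, z) s)).2.1) p
      nlinarith) (mem_Ici.2 le_rfl) (mem_Ici.2 ht) ht
    simp only [hΦ0] at this
    exact this.trans hy.2
  have hzr : ∀ t, 0 ≤ t → (Φ (x, y, z) t).2.2 ≤ r := by
    refine fence (f := fun t => (Φ (x, y, z) t).2.2) (fun t _ => d3 x t)
      (by simp only [hΦ0]; exact hz.2) (fun s _ hs => ?_)
    have e : (clip r (Φ (x, y, z) s)).2.2 = r := by
      have hs : (Φ (x, y, z) s).2.2 = r := hs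
      simp only [clip, hs, min_self]
      exact max_eq_left (by linarith)
    rw [e]
    linarith [(abs_le.1 (hb3 (Φ (x, y, z) s))).2]
  have hzr' : ∀ t, 0 ≤ t → -(Φ (x, y, z) t).2.2 ≤ r := by
    refine fence (f := fun t => -(Φ (x, y, z) t).2.2) (fun t _ => (d3 x t).neg)
      (by simp only [hΦ0]; linarith [hz.1]) (fun s _ hs => ?_)
    have e : (clip r (Φ (x, y, z) s)).2.2 = -r := by
      have hs : (Φ (x, y, z) s).2.2 = -r := by linarith
      simp only [clip, hs]
      exact max_eq_right (min_le_left _ _)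
    rw [e]
    linarith [(abs_le.1 (hb3 (Φ (x, y, z) s))).1]
  have hbox : ∀ t, 0 ≤ t → Φ (x, y, z) t ∈ box r := fun t ht =>
    ⟨hx t ht, ⟨hy0 t ht, hyr t ht⟩, ⟨by linarith [hzr' t ht], hzr t ht⟩⟩
  refine ⟨x, Φ (x, y, z), hΦ0 _, fun t ht => ?_, hbox⟩
  have := hΦ (x, y, z) t
  simp only [hG, clip_of_mem (hbox t ht)] at this
  exact this

/-- Trapped orbits converge to the origin. The cone condition against the zero orbit reduces the
claim to the center and stable coordinates. -/
theorem tendsto_of_trapped (H : LocalHyp r ε C p h₁ h₂ h₃) (hC : 0 < C) (ha : 0 < a)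
    (hc : c < 0) (hε : 0 ≤ ε) (hp : 0 < p) (hr : 0 < r)
    (hεa : 6 * ε ≤ a) (hεc : 3 * ε ≤ -c) {Z : ℝ → ℝ × ℝ × ℝ}
    (hZ : ∀ t, 0 ≤ t → HasDerivAt Z (vfield a c h₁ h₂ h₃ (Z t)) t)
    (bZ : ∀ t, 0 ≤ t → Z t ∈ box r) : Tendsto Z atTop (𝓝 0) := by
  have hxyz : ∀ t, 0 ≤ t → (Z t).1 ^ 2 ≤ (Z t).2.1 ^ 2 + (Z t).2.2 ^ 2 := by
    intro t ht
    have := cone H ha hc hεa hZ (W := fun _ => 0)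
      (fun s _ => by rw [vfield_zero H]; exact hasDerivAt_const _ _) bZ
      (fun s _ => ⟨by simpa using hr.le, by simpa using hr.le, by simpa using hr.le⟩) ht
    simpa using this
  have d2 : ∀ t, 0 ≤ t → HasDerivAt (fun t => (Z t).2.1) (h₂ (Z t)) t :=
    fun t ht => (hZ t ht).snd.fst
  have d3 : ∀ t, 0 ≤ t → HasDerivAt (fun t => (Z t).2.2) (c * (Z t).2.2 + h₃ (Z t)) t :=
    fun t ht => (hZ t ht).snd.snd
  have hnr : ∀ t, 0 ≤ t → ‖Z t‖ ≤ r := fun t ht => norm_le_of_mem_box (bZ t ht)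
  have hanti := antitone_of_deriv d2 (fun t ht => by
    refine (H.decay _ (hnr t ht)).trans ?_
    have := rpow_nonneg (abs_nonneg (Z t).2.1) p
    nlinarith)
  have hy : Tendsto (fun t => (Z t).2.1) atTop (𝓝 0) := by
    rw [Metric.tendsto_atTop]
    intro η hη
    obtain ⟨T, hT0, hT⟩ : ∃ T, 0 ≤ T ∧ (Z T).2.1 < η := by
      by_contra! hcon
      have hκ : 0 < C * η ^ p := by positivity
      have h := antitone_of_deriv (t₀ := 0) (f := fun t => (Z t).2.1 + C * η ^ p * t)
        (fun t ht => (d2 t ht).add ((hasDerivAt_id t).const_mul (C * η ^ p))) (fun t ht => by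
          have h1 := H.decay _ (hnr t ht)
          have h2 : η ^ p ≤ |(Z t).2.1| ^ p :=
            rpow_le_rpow hη.le ((hcon t ht).trans (le_abs_self _)) hp.le
          have h3 := mul_le_mul_of_nonneg_left h2 hC.le
          linarith)
      have hT : (0 : ℝ) ≤ (Z 0).2.1 / (C * η ^ p) := div_nonneg (bZ 0 le_rfl).2.1.1 hκ.le
      have h1 := h (mem_Ici.2 le_rfl) (mem_Ici.2 hT) hT
      have h2 := hcon _ hT
      simp only [mul_div_cancel₀ _ hκ.ne', mul_zero, add_zero] at h1
      linarith
    refine ⟨T, fun t ht => ?_⟩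
    have h1 := hanti (mem_Ici.2 hT0) (mem_Ici.2 (hT0.trans ht)) ht
    rw [Real.dist_eq, sub_zero, abs_of_nonneg (bZ t (hT0.trans ht)).2.1.1]
    exact lt_of_le_of_lt h1 hT
  have hy2 : Tendsto (fun t => (Z t).2.1 ^ 2) atTop (𝓝 0) := by simpa using hy.pow 2
  have hz2 : Tendsto (fun t => (Z t).2.2 ^ 2) atTop (𝓝 0) := by
    refine tendsto_zero_of_deriv_le (κ := -c) (g := fun t => 2 * ε * (Z t).2.1 ^ 2) (by linarith)
      (fun t ht => (d3 t ht).pow 2) (fun t => sq_nonneg _) (fun t ht => ?_)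
      (by simpa using hy2.const_mul (2 * ε))
    have l3 := H.lip₃ (Z t) 0 (hnr t ht) (by simpa using hr.le)
    rw [H.zero₃, sub_zero, sub_zero] at l3
    have hN := norm_nonneg (Z t)
    have hN2 : ‖Z t‖ ^ 2 ≤ 2 * ((Z t).2.1 ^ 2 + (Z t).2.2 ^ 2) := by
      rw [← sqrt_le_sqrt_iff (by positivity), sqrt_sq hN]
      have e : Z t = ((Z t).1, (Z t).2.1, (Z t).2.2) := rfl
      have := hxyz t ht
      rw [e]
      exact norm_le_iff3.2 ⟨abs_le_sqrt (by nlinarith), abs_le_sqrt (by nlinarith),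
        abs_le_sqrt (by nlinarith)⟩
    have hpr : (Z t).2.2 * h₃ (Z t) ≤ |(Z t).2.2| * (ε * ‖Z t‖) := by
      refine (le_abs_self _).trans ?_
      rw [abs_mul]
      gcongr
    have h2 : 2 * (|(Z t).2.2| * (ε * ‖Z t‖)) ≤ ε * ((Z t).2.2 ^ 2 + ‖Z t‖ ^ 2) := by
      rw [← sq_abs (Z t).2.2]
      nlinarith [mul_nonneg hε (sq_nonneg (|(Z t).2.2| - ‖Z t‖))]
    have h3 := mul_le_mul_of_nonneg_left hN2 hε
    have h4 := mul_le_mul_of_nonneg_right hεc (sq_nonneg (Z t).2.2)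
    push_cast
    nlinarith
  have hx2 : Tendsto (fun t => (Z t).1 ^ 2) atTop (𝓝 0) := by
    refine squeeze_zero' (Eventually.of_forall fun t => sq_nonneg _)
      ((eventually_ge_atTop 0).mono hxyz) ?_
    simpa using hy2.add hz2
  have root : ∀ f : ℝ → ℝ, Tendsto (fun t => f t ^ 2) atTop (𝓝 0) → Tendsto f atTop (𝓝 0) := by
    intro f hf
    rw [tendsto_zero_iff_abs_tendsto_zero]
    have := (continuous_sqrt.tendsto 0).comp hf
    simpa [Function.comp_def, sqrt_sq_eq_abs] using this
  exact (root _ hx2).prodMk_nhds (hy.prodMk_nhds (root _ hz2))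

end

theorem stmt16 (δ : ℝ) (hδ : 0 < δ) (h₁ h₂ h₃ : ℝ × ℝ × ℝ → ℝ)
    (C₁ p : ℝ) (hC₁ : 0 < C₁) (hp : 1 < p) (hhyp : CSHyp δ h₁ h₂ h₃ C₁ p)
    (a c : ℝ) (ha : 0 < a) (hc : c < 0) :
    ∃ r₀ : ℝ, 0 < r₀ ∧ r₀ < δ / 2 ∧
      ∃ w : ℝ × ℝ → ℝ,
        (∃ L : ℝ, ∀ p₁ ∈ rect r₀, ∀ p₂ ∈ rect r₀,
          |w p₁ - w p₂| ≤ L * Real.sqrt ((p₁.1 - p₂.1) ^ 2 + (p₁.2 - p₂.2) ^ 2)) ∧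
        (∀ pt ∈ rect r₀, w pt ∈ Set.Icc (-r₀) r₀) ∧
        ∀ y₀ ∈ Set.Icc (0 : ℝ) r₀, ∀ z₀ ∈ Set.Icc (-r₀) r₀,
          ∃ Z₁ Z₂ Z₃ : ℝ → ℝ,
            Z₁ 0 = w (y₀, z₀) ∧ Z₂ 0 = y₀ ∧ Z₃ 0 = z₀ ∧
            (∀ t : ℝ, 0 ≤ t →
              HasDerivAt Z₁ (a * Z₁ t + h₁ (Z₁ t, Z₂ t, Z₃ t)) t ∧
              HasDerivAt Z₂ (h₂ (Z₁ t, Z₂ t, Z₃ t)) t ∧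
              HasDerivAt Z₃ (c * Z₃ t + h₃ (Z₁ t, Z₂ t, Z₃ t)) t) ∧
            Tendsto (fun t : ℝ => (Z₁ t, Z₂ t, Z₃ t)) atTop (𝓝 (0, 0, 0)) ∧
            (∀ t : ℝ, 0 ≤ t → Z₁ t = w (Z₂ t, Z₃ t)) := by
  set ε := min (a / 6) (-c / 3) with hε
  have hc' : 0 < -c := by linarith
  have hε0 : 0 < ε := by positivity
  have hεa : 6 * ε ≤ a := by linarith [min_le_left (a / 6) (-c / 3)]
  have hεc : 3 * ε ≤ -c := by linarith [min_le_right (a / 6) (-c / 3)]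
  obtain ⟨r, hr, hrδ, H⟩ := exists_localHyp hδ hC₁ hhyp hε0
  have ex : ∀ q : ℝ × ℝ, q ∈ rect r → ∃ (x : ℝ) (Z : ℝ → ℝ × ℝ × ℝ), Z 0 = (x, q.1, q.2) ∧
      (∀ t, 0 ≤ t → HasDerivAt Z (vfield a c h₁ h₂ h₃ (Z t)) t) ∧ ∀ t, 0 ≤ t → Z t ∈ box r :=
    fun q hq => exists_trapped H hr hC₁ hε0.le (by linarith) (by linarith) hq.1 hq.2
  choose! w Z hZ0 hZ bZ using ex
  refine ⟨r, hr, hrδ, w, ⟨1, fun q₁ hq₁ q₂ hq₂ => ?_⟩, fun q hq => ?_, fun y₀ hy₀ z₀ hz₀ => ?_⟩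
  · have := cone H ha hc hεa (hZ _ hq₁) (hZ _ hq₂) (bZ _ hq₁) (bZ _ hq₂) le_rfl
    rw [hZ0 _ hq₁, hZ0 _ hq₂] at this
    rw [one_mul]
    exact abs_le_sqrt this
  · have := (bZ q hq 0 le_rfl).1
    rw [hZ0 q hq] at this
    exact this
  · have hq : (y₀, z₀) ∈ rect r := ⟨hy₀, hz₀⟩
    set Y := Z (y₀, z₀) with hY
    have hY0 : Y 0 = (w (y₀, z₀), y₀, z₀) := hZ0 _ hq
    have hYd := hZ _ hq
    have hYb := bZ _ hq
    refine ⟨fun t => (Y t).1, fun t => (Y t).2.1, fun t => (Y t).2.2, by simp [hY0], by simp [hY0],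
      by simp [hY0], fun t ht => ⟨(hYd t ht).fst, (hYd t ht).snd.fst, (hYd t ht).snd.snd⟩,
      tendsto_of_trapped H hC₁ ha hc hε0.le (by linarith) hr hεa hεc hYd hYb, fun t ht => ?_⟩
    have hq' : ((Y t).2.1, (Y t).2.2) ∈ rect r := (hYb t ht).2
    -- The translate of the orbit by `t` and the orbit chosen at `(Z₂ t, Z₃ t)` start with the same
    -- last two coordinates, so the cone condition identifies their first coordinates.
    have := cone H ha hc hεa (Z := fun s => Y (s + t))
      (fun s hs => (hYd (s + t) (by positivity)).comp_add_const s t) (hZ _ hq')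
      (fun s hs => hYb (s + t) (by positivity)) (bZ _ hq') le_rfl
    simp only [zero_add, hZ0 _ hq', sub_self] at this
    have h0 : ((Y t).1 - w ((Y t).2.1, (Y t).2.2)) ^ 2 = 0 :=
      le_antisymm (by simpa using this) (sq_nonneg _)
    exact sub_eq_zero.1 (pow_eq_zero_iff two_ne_zero |>.1 h0)
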